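/- Let l = 5 and m = 3, and consider the trivariate bicycle code with A = x⁴ + x² and B = x + x² + y + z² + z³ (the weight-7 [[30,4,5]] code). Its Tanner graph has a spanning subgraph isomorphic to the Cayley graph of ZMod 10 × ZMod 6; that is, the code has a toric layout with μ = 5 and λ = 3. -/

import Mathlib

/-- The translation matrix `P(g)` over `𝔽₂`: `P(g)_{h,h'} = 1` iff `h = g + h'`. -/
def Pmat {G : Type*} [AddGroup G] [DecidableEq G] (g : G) : Matrix G G (ZMod 2) :=
  Matrix.of fun h h' => if h = g + h' then 1 else 0

/-- Vertex types of the Tanner graph: X-checks, Z-checks, L-data, R-data. -/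
inductive VType : Type
  | X | Z | L | R

/-- The Tanner graph of a two-block code with matrices `A`, `B`. -/
def TannerGraph {G : Type*} (A B : Matrix G G (ZMod 2)) :
    SimpleGraph (VType × G) :=
  SimpleGraph.fromRel fun u v =>
    (u.1 = VType.X ∧ v.1 = VType.L ∧ A u.2 v.2 = 1) ∨
    (u.1 = VType.X ∧ v.1 = VType.R ∧ B u.2 v.2 = 1) ∨
    (u.1 = VType.Z ∧ v.1 = VType.L ∧ B v.2 u.2 = 1) ∨
    (u.1 = VType.Z ∧ v.1 = VType.R ∧ A v.2 u.2 = 1)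

/-- The Cayley graph of `ZMod (2μ) × ZMod (2λ)`: distinct vertices `u`, `v` are
adjacent iff `u - v ∈ {(1,0), (-1,0), (0,1), (0,-1)}`. -/
def CayleyGraph (μ lam : ℕ) : SimpleGraph (ZMod (2 * μ) × ZMod (2 * lam)) :=
  SimpleGraph.fromRel fun u v =>
    u - v = (1, 0) ∨ u - v = (-1, 0) ∨ u - v = (0, 1) ∨ u - v = (0, -1)

/-- `x = P(1,0)` over `G = ZMod 5 × ZMod 3`. -/
def xP : Matrix (ZMod 5 × ZMod 3) (ZMod 5 × ZMod 3) (ZMod 2) := Pmat (1, 0)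

/-- `y = P(0,1)` over `G = ZMod 5 × ZMod 3`. -/
def yP : Matrix (ZMod 5 × ZMod 3) (ZMod 5 × ZMod 3) (ZMod 2) := Pmat (0, 1)

/-- `z = P(1,1)` over `G = ZMod 5 × ZMod 3`. -/
def zP : Matrix (ZMod 5 × ZMod 3) (ZMod 5 × ZMod 3) (ZMod 2) := Pmat (1, 1)

/-- `A = x⁴ + x²` of the weight-7 `[[30,4,5]]` code. -/
def Amat : Matrix (ZMod 5 × ZMod 3) (ZMod 5 × ZMod 3) (ZMod 2) := xP ^ 4 + xP ^ 2

/-- `B = x + x² + y + z² + z³` of the weight-7 `[[30,4,5]]` code. -/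
def Bmat : Matrix (ZMod 5 × ZMod 3) (ZMod 5 × ZMod 3) (ZMod 2) :=
  xP + xP ^ 2 + yP + zP ^ 2 + zP ^ 3

/-!
A pair of monomials `P(a₁), P(a₂)` of `A` moves alternately between X-checks and L-data (and between
R-data and Z-checks), and two such steps translate the index by `a₂ - a₁`; monomials `P(b₁), P(b₂)`
of `B` do the same in the other direction. If `a₂ - a₁` and `b₂ - b₁` correspond to the
standard generators under an isomorphism of `G` with `ZMod μ × ZMod λ`, these steps sweep out the
whole Tanner graph as a `2μ × 2λ` torus, where the parities of its coordinates give the type of a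
vertex. For the present code, `x²` and `x⁴` differ by `(2, 0)`, and `z²` and `x²` by `(0, 1)`.
-/

/-- `P(g)` is one of the monomials of `A`: every entry of `A` in a position where `P(g)` has a `1`
is itself `1`. -/
def HasMonomial {G : Type*} [Add G] (A : Matrix G G (ZMod 2)) (g : G) : Prop :=
  ∀ ⦃r c⦄, r = g + c → A r c = 1

section TranslationMatrices

variable {G : Type*} [AddGroup G] [DecidableEq G]

theorem Pmat_zero : Pmat (0 : G) = 1 := by
  ext h h'
  simp [Pmat, Matrix.one_apply]

theorem Pmat_mul [Fintype G] (g h : G) : Pmat g * Pmat h = Pmat (g + h) := by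
  ext r c
  simp [Pmat, Matrix.mul_apply, add_assoc]

theorem Pmat_pow [Fintype G] (g : G) (n : ℕ) : Pmat g ^ n = Pmat (n • g) := by
  induction n with
  | zero => rw [pow_zero, zero_nsmul, Pmat_zero]
  | succ n ih => rw [pow_succ, ih, Pmat_mul, succ_nsmul]

theorem hasMonomial_sum_Pmat {S : Finset G} {g : G} (hg : g ∈ S) :
    HasMonomial (∑ s ∈ S, Pmat s) g := by
  rintro _ c rfl
  simp [Pmat, Matrix.sum_apply, hg]

end TranslationMatrices

section TannerGraph

variable {G : Type*} {A B : Matrix G G (ZMod 2)} {r c : G}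

theorem tannerGraph_adj_X_L : (TannerGraph A B).Adj (.X, r) (.L, c) ↔ A r c = 1 := by
  simp [TannerGraph]

theorem tannerGraph_adj_X_R : (TannerGraph A B).Adj (.X, r) (.R, c) ↔ B r c = 1 := by
  simp [TannerGraph]

theorem tannerGraph_adj_Z_L : (TannerGraph A B).Adj (.Z, r) (.L, c) ↔ B c r = 1 := by
  simp [TannerGraph]

theorem tannerGraph_adj_Z_R : (TannerGraph A B).Adj (.Z, r) (.R, c) ↔ A c r = 1 := by
  simp [TannerGraph]

end TannerGraph

theorem map_cayleyGraph_le {V : Type*} {T : SimpleGraph V} {μ lam : ℕ}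
    (f : ZMod (2 * μ) × ZMod (2 * lam) ↪ V)
    (hright : ∀ x y, T.Adj (f (x, y)) (f (x + 1, y)))
    (hup : ∀ x y, T.Adj (f (x, y)) (f (x, y + 1))) :
    (CayleyGraph μ lam).map f ≤ T := by
  have adj_of_sub : ∀ u v : ZMod (2 * μ) × ZMod (2 * lam),
      (u - v = (1, 0) ∨ u - v = (-1, 0) ∨ u - v = (0, 1) ∨ u - v = (0, -1)) →
        T.Adj (f u) (f v) := by
    rintro u ⟨x, y⟩ (h | h | h | h) <;> obtain rfl := eq_add_of_sub_eq' h
    · simpa using (hright x y).symm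
    · simpa using hright (x + -1) y
    · simpa using (hup x y).symm
    · simpa using hup x (y + -1)
  rw [SimpleGraph.map_le_iff_le_comap]
  rintro u v ⟨-, h | h⟩
  · exact adj_of_sub u v h
  · exact (adj_of_sub v u h).symm

section Parity

variable {n : ℕ}

/-- Multiplication by two as a map `ZMod n → ZMod (2n)`, onto the even residues. -/
def doubleHom (n : ℕ) : ZMod n →+ ZMod (2 * n) :=
  ZMod.lift n ⟨(AddMonoidHom.mulLeft 2).comp (Int.castAddHom _), by
    simpa using (Nat.cast_mul 2 n).symm.trans (ZMod.natCast_self (2 * n))⟩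

theorem doubleHom_intCast (k : ℤ) : doubleHom n k = 2 * k := by
  simp [doubleHom]

theorem doubleHom_one : doubleHom n 1 = 2 := by
  simpa using doubleHom_intCast (n := n) 1

theorem doubleHom_injective : Function.Injective (doubleHom n) := by
  rw [injective_iff_map_eq_zero]
  intro i hi
  obtain ⟨k, rfl⟩ := ZMod.intCast_surjective i
  have hdvd : (2 * n : ℤ) ∣ 2 * k := by
    exact_mod_cast (ZMod.intCast_zmod_eq_zero_iff_dvd (2 * k) (2 * n)).1
      (by simpa [doubleHom_intCast] using hi)
  exact (ZMod.intCast_zmod_eq_zero_iff_dvd k n).2 (Int.dvd_of_mul_dvd_mul_left two_ne_zero hdvd)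

theorem castHom_doubleHom (i : ZMod n) :
    ZMod.castHom (dvd_mul_right 2 n) (ZMod 2) (doubleHom n i) = 0 := by
  obtain ⟨k, rfl⟩ := ZMod.intCast_surjective i
  rw [doubleHom_intCast, map_mul, map_ofNat, show (2 : ZMod 2) = 0 from rfl, zero_mul]

theorem bijective_doubleHom_add_toNat :
    Function.Bijective fun p : Bool × ZMod n ↦ doubleHom n p.2 + (p.1.toNat : ZMod (2 * n)) := by
  constructor
  · rintro ⟨s, i⟩ ⟨t, j⟩ h
    dsimp only at h
    have hparity : (s.toNat : ZMod 2) = t.toNat := by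
      simpa only [map_add, castHom_doubleHom, map_natCast, zero_add] using
        congrArg (ZMod.castHom (dvd_mul_right 2 n) (ZMod 2)) h
    obtain rfl : s = t := by
      clear h
      decide +revert
    rw [doubleHom_injective (add_right_cancel h)]
  · intro x
    obtain ⟨k, rfl⟩ := ZMod.intCast_surjective x
    obtain ⟨q, rfl | rfl⟩ := k.even_or_odd'
    · exact ⟨(false, q), by simp [doubleHom_intCast]⟩
    · exact ⟨(true, q), by simp [doubleHom_intCast]⟩

/-- The decomposition of a residue modulo `2n` into its parity (`true` for odd) and its half,
`(s, i) ↦ 2i + s`. -/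
noncomputable def parityEquiv (n : ℕ) : Bool × ZMod n ≃ ZMod (2 * n) :=
  Equiv.ofBijective _ bijective_doubleHom_add_toNat

theorem parityEquiv_false_add_one (i : ZMod n) :
    parityEquiv n (false, i) + 1 = parityEquiv n (true, i) := by
  simp [parityEquiv]

theorem parityEquiv_true_add_one (i : ZMod n) :
    parityEquiv n (true, i) + 1 = parityEquiv n (false, i + 1) := by
  simp [parityEquiv, doubleHom_one, add_assoc, one_add_one_eq_two]

end Parity

/-- The vertex type found at a point of the torus whose coordinates have the given parities. -/
def VType.ofParity : Bool × Bool ≃ VType where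
  toFun
    | (false, false) => .X
    | (true, false) => .L
    | (false, true) => .R
    | (true, true) => .Z
  invFun
    | .X => (false, false)
    | .L => (true, false)
    | .R => (false, true)
    | .Z => (true, true)
  left_inv := by rintro ⟨_ | _, _ | _⟩ <;> rfl
  right_inv := by rintro (_ | _ | _ | _) <;> rfl

section ToricLayout

variable {G : Type*} [AddCommGroup G] {μ lam : ℕ} (φ : ZMod μ × ZMod lam ≃+ G)

/-- The toric layout: the point `(2i + s, 2j + t)` of the torus carries the vertex of type
`VType.ofParity (s, t)` with index `φ (i, j) - s a - t b`, so that a step from an even to an odd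
coordinate uses the monomial `P(a)` of `A` or `P(b)` of `B`. -/
noncomputable def toricLayout (a b : G) : ZMod (2 * μ) × ZMod (2 * lam) ≃ VType × G :=
  ((parityEquiv μ).prodCongr (parityEquiv lam)).symm.trans <|
    (Equiv.prodProdProdComm _ _ _ _).trans <|
      VType.ofParity.prodShear fun p ↦
        φ.toEquiv.trans (Equiv.subRight (p.1.toNat • a + p.2.toNat • b))

theorem toricLayout_parityEquiv (a b : G) (s t : Bool) (i : ZMod μ) (j : ZMod lam) :
    toricLayout φ a b (parityEquiv μ (s, i), parityEquiv lam (t, j)) =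
      (VType.ofParity (s, t), φ (i, j) - (s.toNat • a + t.toNat • b)) := by
  simp [toricLayout]

variable {φ} {A B : Matrix G G (ZMod 2)}

theorem toricLayout_adj_right {a₁ a₂ : G} (b : G) (hφ : φ (1, 0) = a₂ - a₁)
    (ha₁ : HasMonomial A a₁) (ha₂ : HasMonomial A a₂)
    (x : ZMod (2 * μ)) (y : ZMod (2 * lam)) :
    (TannerGraph A B).Adj (toricLayout φ a₁ b (x, y)) (toricLayout φ a₁ b (x + 1, y)) := by
  obtain ⟨⟨s, i⟩, rfl⟩ := (parityEquiv μ).surjective x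
  obtain ⟨⟨t, j⟩, rfl⟩ := (parityEquiv lam).surjective y
  have hshift : φ (i + 1, j) = φ (i, j) + (a₂ - a₁) := by
    rw [← hφ, ← map_add, Prod.mk_add_mk, add_zero]
  cases s <;> cases t <;>
    simp only [parityEquiv_false_add_one, parityEquiv_true_add_one, toricLayout_parityEquiv, hshift,
      Bool.toNat_false, Bool.toNat_true, zero_nsmul, one_nsmul]
  · exact tannerGraph_adj_X_L.2 (ha₁ (by abel))
  · exact (tannerGraph_adj_Z_R.2 (ha₁ (by abel))).symm
  · exact (tannerGraph_adj_X_L.2 (ha₂ (by abel))).symm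
  · exact tannerGraph_adj_Z_R.2 (ha₂ (by abel))

theorem toricLayout_adj_up (a : G) {b₁ b₂ : G} (hφ : φ (0, 1) = b₂ - b₁)
    (hb₁ : HasMonomial B b₁) (hb₂ : HasMonomial B b₂)
    (x : ZMod (2 * μ)) (y : ZMod (2 * lam)) :
    (TannerGraph A B).Adj (toricLayout φ a b₁ (x, y)) (toricLayout φ a b₁ (x, y + 1)) := by
  obtain ⟨⟨s, i⟩, rfl⟩ := (parityEquiv μ).surjective x
  obtain ⟨⟨t, j⟩, rfl⟩ := (parityEquiv lam).surjective y
  have hshift : φ (i, j + 1) = φ (i, j) + (b₂ - b₁) := by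
    rw [← hφ, ← map_add, Prod.mk_add_mk, add_zero]
  cases s <;> cases t <;>
    simp only [parityEquiv_false_add_one, parityEquiv_true_add_one, toricLayout_parityEquiv, hshift,
      Bool.toNat_false, Bool.toNat_true, zero_nsmul, one_nsmul]
  · exact tannerGraph_adj_X_R.2 (hb₁ (by abel))
  · exact (tannerGraph_adj_X_R.2 (hb₂ (by abel))).symm
  · exact (tannerGraph_adj_Z_L.2 (hb₁ (by abel))).symm
  · exact tannerGraph_adj_Z_L.2 (hb₂ (by abel))

theorem exists_toric_layout (φ : ZMod μ × ZMod lam ≃+ G) {a₁ a₂ b₁ b₂ : G}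
    (hφa : φ (1, 0) = a₂ - a₁) (hφb : φ (0, 1) = b₂ - b₁)
    (ha₁ : HasMonomial A a₁) (ha₂ : HasMonomial A a₂)
    (hb₁ : HasMonomial B b₁) (hb₂ : HasMonomial B b₂) :
    ∃ H ≤ TannerGraph A B, Nonempty (H ≃g CayleyGraph μ lam) := by
  let e := toricLayout φ a₁ b₁
  exact ⟨(CayleyGraph μ lam).map e.toEmbedding,
    map_cayleyGraph_le e.toEmbedding (toricLayout_adj_right b₁ hφa ha₁ ha₂)
      (toricLayout_adj_up a₁ hφb hb₁ hb₂),
    ⟨(SimpleGraph.Iso.map e _).symm⟩⟩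

end ToricLayout

theorem Amat_eq_sum : Amat = ∑ g ∈ {(4, 0), (2, 0)}, Pmat g := by
  rw [Finset.sum_pair (by decide), Amat, xP, Pmat_pow, Pmat_pow]
  rfl

theorem Bmat_eq_sum : Bmat = ∑ g ∈ {(1, 0), (2, 0), (0, 1), (2, 2), (3, 0)}, Pmat g := by
  simp only [Bmat, xP, yP, zP, Pmat_pow]
  rw [Finset.sum_insert (by decide), Finset.sum_insert (by decide), Finset.sum_insert (by decide),
    Finset.sum_pair (by decide)]
  simp only [← add_assoc]
  rfl

theorem hasMonomial_Amat {g : ZMod 5 × ZMod 3} (hg : g ∈ ({(4, 0), (2, 0)} : Finset _)) :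
    HasMonomial Amat g :=
  Amat_eq_sum ▸ hasMonomial_sum_Pmat hg

theorem hasMonomial_Bmat {g : ZMod 5 × ZMod 3}
    (hg : g ∈ ({(1, 0), (2, 0), (0, 1), (2, 2), (3, 0)} : Finset _)) : HasMonomial Bmat g :=
  Bmat_eq_sum ▸ hasMonomial_sum_Pmat hg

/-- The Tanner graph of the weight-7 `[[30,4,5]]` trivariate bicycle code
(`l = 5`, `m = 3`, `A = x⁴ + x²`, `B = x + x² + y + z² + z³`) has a spanning
subgraph isomorphic to the Cayley graph of `ZMod 10 × ZMod 6`, i.e. the code has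
a toric layout with `μ = 5` and `λ = 3`. -/
theorem stmt18 :
    ∃ H : SimpleGraph (VType × (ZMod 5 × ZMod 3)), H ≤ TannerGraph Amat Bmat ∧
      Nonempty (H ≃g CayleyGraph 5 3) := by
  let two : (ZMod 5)ˣ := ⟨2, 3, by decide, by decide⟩
  let φ : ZMod 5 × ZMod 3 ≃+ ZMod 5 × ZMod 3 := (AddAut.mulLeft two).prodCongr (.refl _)
  have hφa : φ (1, 0) = (4, 0) - (2, 0) := by decide
  have hφb : φ (0, 1) = (2, 0) - (2, 2) := by decide
  exact exists_toric_layout φ hφa hφb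
    (hasMonomial_Amat (by decide)) (hasMonomial_Amat (by decide))
    (hasMonomial_Bmat (by decide)) (hasMonomial_Bmat (by decide))
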